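/- arXiv:1409.6243 — 2 statements merged into one kernel-verified Lean document; each statement's English description precedes it below -/
import Mathlib

section
/- For all integers t ≥ 1 and N ≥ 1, let ζ = exp(2πi/N). Then the value of the generalized Kontsevich–Zagier series at ζ^{-1} equals the value of the generalized U-function at (-1; ζ): ζ^{-t} · Σ_{0 ≤ k_1 ≤ k_2 ≤ … ≤ k_t ≤ N-1} (ζ^{-1};ζ^{-1})_{k_t} · Π_{i=1}^{t-1} ζ^{-k_i(k_i+1)} [k_{i+1} choose k_i]_{ζ^{-1}} = ζ^{-t} · Σ_{1 ≤ k_1 ≤ k_2 ≤ … ≤ k_t ≤ N} ((ζ;ζ)_{k_t-1})^2 · ζ^{k_t} · Π_{i=1}^{t-1} ζ^{k_i^2} [k_{i+1} + k_i - i + 2·Σ_{j=1}^{i-1} k_j choose k_{i+1} - k_i]_ζ. (Both sides are finite sums over integer t-tuples; for t = 1 the products over i are empty.) -/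
open Finset

/-- The finite q-Pochhammer symbol `(a;q)_n`. -/
noncomputable def qPoch (q a : ℂ) (n : ℕ) : ℂ := ∏ j ∈ Finset.range n, (1 - a * q ^ j)

/-- The Gaussian binomial coefficient `[n choose k]_q`, zero outside `0 ≤ k ≤ n`. -/
noncomputable def qBinom (q : ℂ) (n k : ℤ) : ℂ :=
  if 0 ≤ k ∧ k ≤ n then
    ∏ j ∈ Finset.range k.toNat, (1 - q ^ (n - k + (j : ℤ) + 1)) / (1 - q ^ ((j : ℤ) + 1))
  else 0

/-- The product `Π_{i=1}^{t-1} q^{k_i(k_i+1)} [k_{i+1} choose k_i]_q` appearing in the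
generalized Kontsevich–Zagier series `F_t` (here the tuple has length `t+1`,
i.e. the paper's `t` equals `t+1`). -/
noncomputable def FtProd (q : ℂ) (t : ℕ) (k : Fin (t+1) → ℕ) : ℂ :=
  ∏ i : Fin t, (q ^ (k i.castSucc * (k i.castSucc + 1)) *
    qBinom q (k i.succ : ℤ) (k i.castSucc : ℤ))

/-- The product `Π_{i=1}^{t-1} q^{k_i^2} [k_{i+1}+k_i-i+2Σ_{j<i}k_j choose k_{i+1}-k_i]_q`
appearing in the generalized U-function `U_t` (tuple of length `t+1`). -/
noncomputable def UtProd (q : ℂ) (t : ℕ) (K : Fin (t+1) → ℕ) : ℂ :=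
  ∏ i : Fin t, (q ^ (K i.castSucc ^ 2) *
    qBinom q ((K i.succ : ℤ) + (K i.castSucc : ℤ) - ((i : ℕ) + 1)
        + 2 * ∑ j ∈ Finset.univ.filter (fun j : Fin (t+1) => (j : ℕ) < (i : ℕ)), (K j : ℤ))
      ((K i.succ : ℤ) - (K i.castSucc : ℤ)))

/-!
Write `P_n = (q;q)_n` at a primitive `N`-th root of unity `q`. Both sums may be taken over all
tuples, because the Gaussian binomials vanish off the monotone ones. Since `q⁻¹ ^ (N-1-k)` equals
`q ^ (k+1)`, the `q`-Chu–Vandermonde identity evaluates `Σ_u P_{k+u}² q^u / P_u` as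
`q^{-(k+1)²} P_k²`. Combined with the `q`-binomial theorem, this sums out the variables of the
U-series one at a time, from the last to the first, each step applying the same linear operator `T`
to a sequence that starts as the delta `δ` at `0`. Summing out the variables of the
Kontsevich–Zagier series from the first to the last also applies `T` once each. For tuples of
length `t` both series equal `Σ_r (q⁻¹;q⁻¹)_r P_r (T^t δ)(r)`, up to the common prefactor.
-/

section QPochhammer

variable {q : ℂ}

lemma qPoch_zero (q a : ℂ) : qPoch q a 0 = 1 := by simp [qPoch]

lemma qPoch_succ (q a : ℂ) (n : ℕ) : qPoch q a (n + 1) = qPoch q a n * (1 - a * q ^ n) :=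
  prod_range_succ _ n

lemma qPoch_succ' (q a : ℂ) (n : ℕ) : qPoch q a (n + 1) = (1 - a) * qPoch q (a * q) n := by
  simp only [qPoch, prod_range_succ', pow_zero, mul_one, pow_succ', mul_assoc]
  exact mul_comm _ _

lemma qPoch_add (q a : ℂ) (m n : ℕ) :
    qPoch q a (m + n) = qPoch q a m * qPoch q (a * q ^ m) n := by
  simp only [qPoch, prod_range_add, pow_add, mul_assoc]

lemma qPoch_ne_zero_of_le {a : ℂ} {m n : ℕ} (hn : qPoch q a n ≠ 0) (hmn : m ≤ n) :
    qPoch q a m ≠ 0 := by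
  obtain ⟨k, rfl⟩ := Nat.exists_eq_add_of_le hmn
  rw [qPoch_add] at hn
  exact left_ne_zero_of_mul hn

lemma qPoch_self_ne_zero_of_lt {N n : ℕ} (hq : IsPrimitiveRoot q N) (hn : n < N) :
    qPoch q q n ≠ 0 := by
  refine prod_ne_zero_iff.2 fun j hj ↦ ?_
  rw [← pow_succ', sub_ne_zero]
  exact (hq.pow_ne_one_of_pos_of_lt j.succ_ne_zero (by grind)).symm

lemma one_sub_inv_pow {K : Type*} [Field K] {q : K} (hq : q ≠ 0) (n : ℕ) :
    1 - q⁻¹ ^ n = -q⁻¹ ^ n * (1 - q ^ n) := by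
  rw [inv_pow]
  field_simp
  ring

lemma qPoch_inv_inv (hq : q ≠ 0) (n : ℕ) :
    qPoch q⁻¹ q⁻¹ n = (-1) ^ n * q⁻¹ ^ (n + 1).choose 2 * qPoch q q n := by
  induction n with
  | zero => simp [qPoch_zero]
  | succ n ih =>
    rw [qPoch_succ, qPoch_succ, ih, ← pow_succ', ← pow_succ', one_sub_inv_pow hq,
      Nat.choose_succ_succ' (n + 1) 1, Nat.choose_one_right, pow_add]
    ring

lemma q_chu_vandermonde_term_succ (hq : q ≠ 0) (b : ℂ) (n : ℕ) {j : ℕ}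
    (hj : qPoch q q (j + 1) ≠ 0) :
    qPoch q (q⁻¹ ^ (n + 1)) (j + 1) * qPoch q b (j + 1) / qPoch q q (j + 1) * q ^ (j + 1) =
      qPoch q (q⁻¹ ^ n) (j + 1) * qPoch q b (j + 1) / qPoch q q (j + 1) * q ^ (j + 1) -
        q⁻¹ ^ n * (1 - b) *
          (qPoch q (q⁻¹ ^ n) j * qPoch q (b * q) j / qPoch q q j * q ^ j) := by
  have hpow : q⁻¹ ^ n = q⁻¹ ^ (n + 1) * q := by rw [pow_succ, inv_mul_cancel_right₀ hq]
  rw [qPoch_succ] at hj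
  have hj₀ := left_ne_zero_of_mul hj
  have hj₁ := right_ne_zero_of_mul hj
  rw [qPoch_succ' q (q⁻¹ ^ (n + 1)), ← hpow, qPoch_succ q (q⁻¹ ^ n), qPoch_succ' q b,
    qPoch_succ q q, hpow]
  field_simp
  ring

theorem q_chu_vandermonde (hq : q ≠ 0) {n : ℕ} (hn : qPoch q q n ≠ 0) (b : ℂ) :
    ∑ j ∈ range (n + 1), qPoch q (q⁻¹ ^ n) j * qPoch q b j / qPoch q q j * q ^ j = b ^ n := by
  induction n generalizing b with
  | zero => simp [qPoch_zero]
  | succ n ih =>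
    have ih := ih (qPoch_ne_zero_of_le hn n.le_succ)
    have hpow : q⁻¹ ^ n * q ^ n = 1 := by rw [← mul_pow, inv_mul_cancel₀ hq, one_pow]
    have hvanish : qPoch q (q⁻¹ ^ n) (n + 1) = 0 := by rw [qPoch_succ, hpow, sub_self, mul_zero]
    have hsum : ∑ j ∈ range (n + 2),
        qPoch q (q⁻¹ ^ n) j * qPoch q b j / qPoch q q j * q ^ j = b ^ n := by
      rw [sum_range_succ, ih, hvanish, zero_mul, zero_div, zero_mul, add_zero]
    rw [sum_range_succ', sum_congr rfl fun j hj ↦ q_chu_vandermonde_term_succ hq b n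
      (qPoch_ne_zero_of_le hn (by grind)), sum_sub_distrib, ← mul_sum, ih (b * q)]
    rw [sum_range_succ'] at hsum
    simp only [qPoch_zero] at hsum ⊢
    linear_combination hsum - (1 - b) * b ^ n * hpow

/-- The `q`-binomial theorem, divided by `(q;q)_n` so that no Gaussian binomials occur. -/
theorem qPoch_div_qPoch_self_eq_sum_antidiagonal {n : ℕ} (hn : qPoch q q n ≠ 0) (c : ℂ) :
    qPoch q c n / qPoch q q n = ∑ x ∈ antidiagonal n,
      (-c) ^ x.1 * q ^ x.1.choose 2 / (qPoch q q x.1 * qPoch q q x.2) := by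
  induction n with
  | zero => simp [qPoch_zero]
  | succ n ih =>
    have ih := ih (qPoch_ne_zero_of_le hn n.le_succ)
    set e : ℕ × ℕ → ℂ := fun x ↦
      (-c) ^ x.1 * q ^ x.1.choose 2 / (qPoch q q x.1 * qPoch q q x.2) with he
    have he_left (x : ℕ × ℕ) (hx : x ∈ antidiagonal n) :
        (1 - q ^ (x.1 + 1)) * e (x.1 + 1, x.2) = -c * q ^ x.1 * e x := by
      have h := qPoch_ne_zero_of_le hn (Nat.succ_le_succ (HasAntidiagonal.antidiagonal.fst_le hx))
      simp only [he, qPoch_succ, Nat.choose_succ_succ' x.1 1, Nat.choose_one_right,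
        pow_add q x.1 (x.1.choose 2), ← pow_succ'] at h ⊢
      have h₀ := left_ne_zero_of_mul h
      have h₁ := right_ne_zero_of_mul h
      field_simp
      ring
    have he_right (x : ℕ × ℕ) (hx : x ∈ antidiagonal n) :
        (1 - q ^ (x.2 + 1)) * e (x.1, x.2 + 1) = e x := by
      have h := qPoch_ne_zero_of_le hn (Nat.succ_le_succ (HasAntidiagonal.antidiagonal.snd_le hx))
      simp only [he, qPoch_succ, ← pow_succ'] at h ⊢
      have h₀ := left_ne_zero_of_mul h
      have h₁ := right_ne_zero_of_mul h
      field_simp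
    have hsplit : ∀ x ∈ antidiagonal (n + 1), (1 - q ^ (n + 1)) * e x =
        (1 - q ^ x.2) * e x + q ^ x.2 * ((1 - q ^ x.1) * e x) := by
      intro x hx
      rw [← mem_antidiagonal.1 hx, pow_add]
      ring
    have hrec : (1 - q ^ (n + 1)) * ∑ x ∈ antidiagonal (n + 1), e x =
        (1 - c * q ^ n) * ∑ x ∈ antidiagonal n, e x := by
      rw [mul_sum, sum_congr rfl hsplit, sum_add_distrib, Nat.sum_antidiagonal_succ',
        Nat.sum_antidiagonal_succ, mul_sum]
      simp only [pow_zero, sub_self, zero_mul, mul_zero, zero_add]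
      rw [← sum_add_distrib]
      refine sum_congr rfl fun x hx ↦ ?_
      rw [he_left x hx, he_right x hx, ← mem_antidiagonal.1 hx, pow_add]
      ring
    rw [qPoch_succ, ← pow_succ'] at hn
    rw [qPoch_succ, qPoch_succ q q, mul_div_mul_comm, ih, ← pow_succ', mul_div_assoc', mul_comm,
      ← hrec, mul_div_cancel_left₀ _ (right_ne_zero_of_mul hn)]

end QPochhammer

section GaussianBinomial

variable {q : ℂ}

lemma qBinom_of_neg (q : ℂ) (n : ℤ) {k : ℤ} (hk : k < 0) : qBinom q n k = 0 :=
  if_neg fun h ↦ hk.not_ge h.1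

lemma qBinom_of_lt (q : ℂ) {n k : ℤ} (hnk : n < k) : qBinom q n k = 0 :=
  if_neg fun h ↦ hnk.not_ge h.2

lemma qBinom_add_right (q : ℂ) (a k : ℕ) :
    qBinom q ((a + k : ℕ) : ℤ) k = qPoch q (q ^ (a + 1)) k / qPoch q q k := by
  rw [qBinom, if_pos (by omega), Int.toNat_natCast, qPoch, qPoch, ← prod_div_distrib]
  refine prod_congr rfl fun j _ ↦ ?_
  rw [show ((a + k : ℕ) : ℤ) - k + j + 1 = (a + 1 + j : ℕ) by push_cast; ring,
    ← Nat.cast_succ j, zpow_natCast, zpow_natCast, pow_add q (a + 1), pow_succ' q j]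

lemma qBinom_add_right_eq_div {a : ℕ} (ha : qPoch q q a ≠ 0) (k : ℕ) :
    qBinom q ((a + k : ℕ) : ℤ) k = qPoch q q (a + k) / (qPoch q q a * qPoch q q k) := by
  rw [qBinom_add_right, qPoch_add, ← pow_succ', mul_div_mul_left _ _ ha]

lemma qBinom_inv_add_right (hq : q ≠ 0) (a k : ℕ) :
    qBinom q⁻¹ ((a + k : ℕ) : ℤ) k = q⁻¹ ^ (a * k) * qBinom q ((a + k : ℕ) : ℤ) k := by
  have hpow : q⁻¹ ^ (a * k) = ∏ _j ∈ range k, q⁻¹ ^ a := by rw [prod_const, card_range, pow_mul]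
  simp only [qBinom_add_right, qPoch, ← prod_div_distrib]
  rw [hpow, ← prod_mul_distrib]
  refine prod_congr rfl fun j _ ↦ ?_
  rw [← pow_add, ← pow_succ', ← pow_add, ← pow_succ', one_sub_inv_pow hq, one_sub_inv_pow hq,
    mul_div_mul_comm, neg_div_neg_eq, show a + 1 + j = a + (j + 1) by ring,
    pow_add q⁻¹, mul_div_cancel_right₀ _ (pow_ne_zero _ (inv_ne_zero hq))]

end GaussianBinomial

lemma sum_antidiagonal_sum_range_sub_comm {M : Type*} [AddCommMonoid M] (n : ℕ)
    (f : ℕ → ℕ → ℕ → M) :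
    ∑ l ∈ range n, ∑ x ∈ antidiagonal l, ∑ m ∈ range (n - l), f x.1 x.2 m =
      ∑ r ∈ range n, ∑ x ∈ antidiagonal r, ∑ u ∈ range (n - r), f x.2 u x.1 := by
  -- Both sides run over the triples `(a, b, m)` with `a + b + m < n`.
  simp only [sum_sigma']
  refine sum_bij' (fun y _ ↦ ⟨y.2.2 + y.2.1.1, (y.2.2, y.2.1.1), y.2.1.2⟩)
    (fun y _ ↦ ⟨y.2.1.2 + y.2.2, (y.2.1.2, y.2.2), y.2.1.1⟩) ?_ ?_ ?_ ?_ ?_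
  all_goals
    rintro ⟨l, ⟨a, b⟩, m⟩ h
    simp only [mem_sigma, mem_range, HasAntidiagonal.mem_antidiagonal, true_and] at h ⊢
  · omega
  · omega
  · obtain ⟨-, rfl, -⟩ := h
    rfl
  · obtain ⟨-, rfl, -⟩ := h
    rfl

section Transfer

/-- The transfer operator `φ ↦ (r ↦ Σ_{b ≤ r} q^{-b(r+1)} φ(b) / (q;q)_{r-b})`. Summing out one
variable of either series applies it once. -/
noncomputable def transferOp (q : ℂ) (φ : ℕ → ℂ) (r : ℕ) : ℂ :=
  ∑ x ∈ antidiagonal r, q⁻¹ ^ (x.1 * (r + 1)) * φ x.1 / qPoch q q x.2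

/-- The tail sum `Σ_{r < N-k} (q;q)_{k+r}² (-a)^r q^{-r(r-1)/2} φ(r)`, the shape of the
U-series with first variable `k` after all later variables have been summed out. For the product
`shiftedUtProd q z` the parameter `a` is `q^z`. -/
noncomputable def tailSum (q : ℂ) (N : ℕ) (φ : ℕ → ℂ) (a : ℂ) (k : ℕ) : ℂ :=
  ∑ r ∈ range (N - k), qPoch q q (k + r) ^ 2 * (-a) ^ r * q⁻¹ ^ r.choose 2 * φ r

variable {q : ℂ} {N : ℕ}

lemma sum_qPoch_self_sq_mul_pow_div (hq : IsPrimitiveRoot q N) {k : ℕ} (hk : k < N) :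
    ∑ u ∈ range (N - k), qPoch q q (k + u) ^ 2 * q ^ u / qPoch q q u =
      q⁻¹ ^ (k + 1) ^ 2 * qPoch q q k ^ 2 := by
  have hq₀ : q ≠ 0 := hq.ne_zero (by omega)
  obtain ⟨n, rfl⟩ := Nat.exists_eq_add_of_lt hk
  have hroot : q⁻¹ ^ n = q ^ (k + 1) := by
    rw [inv_pow]
    refine inv_eq_of_mul_eq_one_right ?_
    rw [← pow_add, ← hq.pow_eq_one]
    congr 1
    omega
  have hvand := q_chu_vandermonde hq₀ (qPoch_self_ne_zero_of_lt hq (n := n) (by omega))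
    (q ^ (k + 1))
  have hpow : (q ^ (k + 1)) ^ n = q⁻¹ ^ (k + 1) ^ 2 := by
    rw [inv_pow]
    refine eq_inv_of_mul_eq_one_left ?_
    rw [← pow_mul, ← pow_add, show (k + 1) * n + (k + 1) ^ 2 = (k + n + 1) * (k + 1) by ring,
      pow_mul, hq.pow_eq_one, one_pow]
  rw [hroot] at hvand
  rw [← hpow, ← hvand, sum_mul, show k + n + 1 - k = n + 1 by omega]
  refine sum_congr rfl fun u _ ↦ ?_
  rw [qPoch_add, ← pow_succ']
  ring

lemma transfer_weight_identity (hq : q ≠ 0) (α : ℂ) (k a b : ℕ) :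
    (-(α * q ^ (2 * k + 2))) ^ a * q ^ a.choose 2 * q ^ a *
        ((-(α * q ^ (2 * k + 1))) ^ b * q⁻¹ ^ b.choose 2) * q⁻¹ ^ (k + (b + a) + 1) ^ 2 =
      q⁻¹ ^ (k + 1) ^ 2 * ((-α) ^ (b + a) * q⁻¹ ^ (b + a).choose 2) *
        q⁻¹ ^ (b * (b + a + 1)) := by
  have hexp : q ^ ((2 * k + 2) * a + a.choose 2 + a + (2 * k + 1) * b) *
      (q⁻¹ ^ b.choose 2 * q⁻¹ ^ (k + (b + a) + 1) ^ 2) =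
      q⁻¹ ^ (k + 1) ^ 2 * q⁻¹ ^ (b + a).choose 2 * q⁻¹ ^ (b * (b + a + 1)) := by
    simp only [inv_pow]
    simp only [← zpow_natCast, ← zpow_neg, ← zpow_add₀ hq]
    congr 1
    qify
    simp only [Nat.cast_choose_two, Nat.cast_add]
    ring
  linear_combination (-α) ^ (b + a) * hexp

/-- The `(a, b, m)`-term of `∑ l, (α q^(2k+2);q)_l / (q;q)_l * q^l * tailSum φ (α q^(2k+1)) (k + l)`
once the quotient is expanded by the `q`-binomial theorem over `a + b = l` and the tail sum over
its variable `m`. -/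
noncomputable def tailTerm (q : ℂ) (φ : ℕ → ℂ) (α : ℂ) (k a b m : ℕ) : ℂ :=
  (-(α * q ^ (2 * k + 2))) ^ a * q ^ a.choose 2 / (qPoch q q a * qPoch q q b) * q ^ (a + b) *
    (qPoch q q (k + (a + b) + m) ^ 2 * (-(α * q ^ (2 * k + 1))) ^ m * q⁻¹ ^ m.choose 2 * φ m)

lemma qPoch_div_mul_tailSum_eq_sum_tailTerm (hq : IsPrimitiveRoot q N) (φ : ℕ → ℂ) (α : ℂ)
    {k l : ℕ} (hl : l < N) :
    qPoch q (α * q ^ (2 * k + 2)) l / qPoch q q l * q ^ l *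
        tailSum q N φ (α * q ^ (2 * k + 1)) (k + l) =
      ∑ x ∈ antidiagonal l, ∑ m ∈ range (N - k - l), tailTerm q φ α k x.1 x.2 m := by
  rw [qPoch_div_qPoch_self_eq_sum_antidiagonal (qPoch_self_ne_zero_of_lt hq hl), sum_mul, sum_mul]
  refine sum_congr rfl fun x hx ↦ ?_
  rw [tailSum, mul_sum, Nat.sub_sub]
  simp only [tailTerm, HasAntidiagonal.mem_antidiagonal.1 hx]

lemma sum_tailTerm (hq : IsPrimitiveRoot q N) (φ : ℕ → ℂ) (α : ℂ) {k a b : ℕ}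
    (hN : k + (b + a) < N) :
    ∑ u ∈ range (N - (k + (b + a))), tailTerm q φ α k a u b =
      q⁻¹ ^ (k + 1) ^ 2 *
        (qPoch q q (k + (b + a)) ^ 2 * (-α) ^ (b + a) * q⁻¹ ^ (b + a).choose 2 *
          (q⁻¹ ^ (b * (b + a + 1)) * φ b / qPoch q q a)) := by
  have hfactor (u : ℕ) : tailTerm q φ α k a u b =
      (-(α * q ^ (2 * k + 2))) ^ a * q ^ a.choose 2 * q ^ a *
          ((-(α * q ^ (2 * k + 1))) ^ b * q⁻¹ ^ b.choose 2) * φ b / qPoch q q a *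
        (qPoch q q (k + (b + a) + u) ^ 2 * q ^ u / qPoch q q u) := by
    rw [tailTerm, show k + (a + u) + b = k + (b + a) + u by ring, pow_add q a u]
    simp only [div_eq_mul_inv, mul_inv]
    ring
  simp only [hfactor]
  rw [← mul_sum, sum_qPoch_self_sq_mul_pow_div hq hN]
  linear_combination (φ b / qPoch q q a * qPoch q q (k + (b + a)) ^ 2) *
    transfer_weight_identity (hq.ne_zero (Nat.ne_zero_of_lt hN)) α k a b

theorem sum_qPoch_div_mul_tailSum (hq : IsPrimitiveRoot q N) (φ : ℕ → ℂ) (α : ℂ) (k : ℕ) :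
    ∑ l ∈ range (N - k), qPoch q (α * q ^ (2 * k + 2)) l / qPoch q q l * q ^ l *
        tailSum q N φ (α * q ^ (2 * k + 1)) (k + l) =
      q⁻¹ ^ (k + 1) ^ 2 * tailSum q N (transferOp q φ) α k := by
  have hlt {l : ℕ} (hl : l ∈ range (N - k)) : k + l < N := by
    rw [mem_range] at hl
    omega
  rw [sum_congr rfl fun l hl ↦ qPoch_div_mul_tailSum_eq_sum_tailTerm hq φ α
    (lt_of_le_of_lt (Nat.le_add_left l k) (hlt hl)), sum_antidiagonal_sum_range_sub_comm, tailSum,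
    mul_sum]
  refine sum_congr rfl fun r hr ↦ ?_
  rw [transferOp, mul_sum, mul_sum]
  refine sum_congr rfl ?_
  rintro ⟨b, a⟩ hx
  obtain rfl : b + a = r := HasAntidiagonal.mem_antidiagonal.1 hx
  rw [Nat.sub_sub, sum_tailTerm hq φ α (hlt hr)]

end Transfer

section VariableSummation

variable {q : ℂ} {N : ℕ}

lemma transferOp_single_zero (q : ℂ) (r : ℕ) :
    transferOp q (Pi.single 0 1) r = (qPoch q q r)⁻¹ := by
  cases r with
  | zero => simp [transferOp]
  | succ r => simp [transferOp, Nat.sum_antidiagonal_succ]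

lemma tailSum_single_zero (q a : ℂ) {k : ℕ} (hk : k < N) :
    tailSum q N (Pi.single 0 1) a k = qPoch q q k ^ 2 := by
  obtain ⟨n, rfl⟩ := Nat.exists_eq_add_of_lt hk
  rw [tailSum, show k + n + 1 - k = n + 1 by omega, sum_range_succ']
  simp

lemma tailSum_inv_zero_eq_sum (hq : IsPrimitiveRoot q N) (φ : ℕ → ℂ) :
    tailSum q N φ q⁻¹ 0 =
      ∑ r ∈ range N, qPoch q⁻¹ q⁻¹ r * (qPoch q q r * φ r) := by
  refine sum_congr rfl fun r hr ↦ ?_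
  have hq₀ : q ≠ 0 := hq.ne_zero (Nat.ne_zero_of_lt (mem_range.1 hr))
  rw [qPoch_inv_inv hq₀, Nat.choose_succ_succ' r 1, Nat.choose_one_right, pow_add,
    neg_pow, zero_add]
  ring

lemma sum_pow_mul_tailSum_one (hq : IsPrimitiveRoot q N) (φ : ℕ → ℂ) :
    ∑ k ∈ range N, q ^ (k + 1) * tailSum q N φ 1 k = tailSum q N (transferOp q φ) q⁻¹ 0 := by
  rcases N.eq_zero_or_pos with rfl | hN
  · simp [tailSum]
  have hq₀ : q ≠ 0 := hq.ne_zero hN.ne'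
  have hsum := sum_qPoch_div_mul_tailSum hq φ q⁻¹ 0
  have hc : q⁻¹ * q ^ (2 * 0 + 2) = q := by field_simp
  have hβ : q⁻¹ * q ^ (2 * 0 + 1) = 1 := by
    rw [mul_zero, zero_add, pow_one, inv_mul_cancel₀ hq₀]
  rw [hc, hβ, zero_add, one_pow, pow_one, inv_mul_eq_div, eq_div_iff hq₀, sum_mul,
    Nat.sub_zero] at hsum
  rw [← hsum]
  refine sum_congr rfl fun l hl ↦ ?_
  rw [div_self (qPoch_self_ne_zero_of_lt hq (mem_range.1 hl)), zero_add]
  ring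

lemma sum_qBinom_mul_tailSum (hq : IsPrimitiveRoot q N) (φ : ℕ → ℂ) (z : ℕ) (k : Fin N) :
    ∑ l : Fin N, q ^ ((k + 1 : ℕ) ^ 2) * qBinom q (l + k + 1 + z : ℕ) (l - k) *
        (q ^ (l + 1 : ℕ) * tailSum q N φ (q ^ (z + 2 * k + 1)) l) =
      q ^ (k + 1 : ℕ) * tailSum q N (transferOp q φ) (q ^ z) k := by
  obtain ⟨k, hk⟩ := k
  have hq₀ : q ≠ 0 := hq.ne_zero (by omega)
  rw [Fin.sum_univ_eq_sum_range fun l : ℕ ↦ q ^ ((k + 1) ^ 2) *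
      qBinom q (l + k + 1 + z : ℕ) (l - k) * (q ^ (l + 1) * tailSum q N φ (q ^ (z + 2 * k + 1)) l)]
  have hvanish : ∀ l ∈ range k, q ^ ((k + 1) ^ 2) * qBinom q (l + k + 1 + z : ℕ) (l - k) *
      (q ^ (l + 1) * tailSum q N φ (q ^ (z + 2 * k + 1)) l) = 0 := by
    intro l hl
    rw [mem_range] at hl
    rw [qBinom_of_neg _ _ (by omega), mul_zero, zero_mul]
  have hN : range N = range (k + (N - k)) := by rw [Nat.add_sub_cancel' hk.le]
  rw [hN, sum_range_add, sum_eq_zero hvanish, zero_add]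
  have hcore : tailSum q N (transferOp q φ) (q ^ z) k = q ^ (k + 1) ^ 2 *
      ∑ m ∈ range (N - k), qPoch q (q ^ (z + 2 * k + 1 + 1)) m / qPoch q q m * q ^ m *
        tailSum q N φ (q ^ (z + 2 * k + 1)) (k + m) := by
    rw [show z + 2 * k + 1 + 1 = z + (2 * k + 2) by ring,
      show z + 2 * k + 1 = z + (2 * k + 1) by ring, pow_add q z, pow_add q z,
      sum_qPoch_div_mul_tailSum hq, ← mul_assoc, ← mul_pow, mul_inv_cancel₀ hq₀, one_pow,
      one_mul]
  rw [hcore, mul_sum, mul_sum]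
  refine sum_congr rfl fun m _ ↦ ?_
  rw [show k + m + k + 1 + z = (z + 2 * k + 1) + m by ring,
    show ((k + m : ℕ) - k : ℤ) = m by push_cast; ring, qBinom_add_right, add_right_comm k m 1,
    pow_add q (k + 1)]
  ring

lemma sum_qBinom_inv_mul_eq_transferOp (hq : IsPrimitiveRoot q N) (φ : ℕ → ℂ) (l : Fin N) :
    ∑ k : Fin N, q⁻¹ ^ ((k : ℕ) * (k + 1)) * qBinom q⁻¹ l k * (qPoch q q k * φ k) =
      qPoch q q l * transferOp q φ l := by
  obtain ⟨l, hl⟩ := l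
  have hq₀ : q ≠ 0 := hq.ne_zero (by omega)
  rw [Fin.sum_univ_eq_sum_range fun k : ℕ ↦
      q⁻¹ ^ (k * (k + 1)) * qBinom q⁻¹ l k * (qPoch q q k * φ k)]
  have hvanish : ∀ k ∈ range N, k ∉ range (l + 1) →
      q⁻¹ ^ (k * (k + 1)) * qBinom q⁻¹ l k * (qPoch q q k * φ k) = 0 := by
    intro k _ hk
    rw [mem_range] at hk
    rw [qBinom_of_lt _ (by omega), mul_zero, zero_mul]
  rw [← sum_subset (range_subset_range.2 hl) hvanish, transferOp, mul_sum,
    ← Nat.sum_antidiagonal_eq_sum_range_succ_mk fun x : ℕ × ℕ ↦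
      q⁻¹ ^ (x.1 * (x.1 + 1)) * qBinom q⁻¹ l x.1 * (qPoch q q x.1 * φ x.1)]
  refine sum_congr rfl ?_
  rintro ⟨k, a⟩ hx
  obtain rfl : k + a = l := HasAntidiagonal.mem_antidiagonal.1 hx
  dsimp only
  have hk : qPoch q q k ≠ 0 := qPoch_self_ne_zero_of_lt hq (by omega)
  have ha : qPoch q q a ≠ 0 := qPoch_self_ne_zero_of_lt hq (by omega)
  rw [add_comm k a, qBinom_inv_add_right hq₀, qBinom_add_right_eq_div ha,
    show k * (a + k + 1) = k * (k + 1) + a * k by ring, pow_add]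
  field_simp

end VariableSummation

section Tuples

variable {q : ℂ} {N : ℕ}

/-- The product of the U-function in the variables `k_i = K_i - 1`, with `z` added to the top of
every Gaussian binomial. Fixing the first variable `k_0` turns `z` into `z + 2 k_0 + 1`, which makes
the summation over tuples recursive. -/
noncomputable def shiftedUtProd (q : ℂ) (z t : ℕ) (k : Fin (t + 1) → ℕ) : ℂ :=
  ∏ i : Fin t, q ^ ((k i.castSucc + 1) ^ 2) *
    qBinom q (k i.succ + k i.castSucc + 1 +
      (z + ∑ j : Fin (t + 1) with j.val < i.val, (2 * k j + 1)) : ℕ) (k i.succ - k i.castSucc)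

lemma UtProd_succ_eq_shiftedUtProd (q : ℂ) (t : ℕ) (k : Fin (t + 1) → ℕ) :
    UtProd q t (fun i ↦ k i + 1) = shiftedUtProd q 0 t k := by
  refine prod_congr rfl fun i _ ↦ ?_
  have hcard : #{j : Fin (t + 1) | (j : ℕ) < i} = (i : ℕ) := by
    rw [Fin.card_filter_val_lt, min_eq_right (by omega)]
  congr 2
  · push_cast
    simp only [sum_add_distrib, ← mul_sum, sum_const, hcard, nsmul_eq_mul]
    ring
  · push_cast
    ring

lemma shiftedUtProd_succ (q : ℂ) (z t : ℕ) (k : Fin (t + 2) → ℕ) :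
    shiftedUtProd q z (t + 1) k =
      q ^ ((k 0 + 1) ^ 2) * qBinom q (k 1 + k 0 + 1 + z : ℕ) (k 1 - k 0) *
        shiftedUtProd q (z + 2 * k 0 + 1) t (fun i ↦ k i.succ) := by
  have hshift (i : Fin t) : ∑ j : Fin (t + 2) with j.val < i.succ.val, (2 * k j + 1) =
      2 * k 0 + 1 + ∑ j : Fin (t + 1) with j.val < i.val, (2 * k j.succ + 1) := by
    simp only [sum_filter, Fin.sum_univ_succ, Fin.val_zero, Fin.val_succ, Nat.succ_pos,
      Nat.add_lt_add_iff_right, if_true]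
  rw [shiftedUtProd, Fin.prod_univ_succ]
  simp only [hshift]
  simp [shiftedUtProd, add_assoc]

lemma FtProd_succ (q : ℂ) (t : ℕ) (k : Fin (t + 2) → ℕ) :
    FtProd q (t + 1) k = FtProd q t (fun i ↦ k i.castSucc) *
      (q ^ (k (Fin.last t).castSucc * (k (Fin.last t).castSucc + 1)) *
        qBinom q (k (Fin.last (t + 1))) (k (Fin.last t).castSucc)) :=
  Fin.prod_univ_castSucc _

lemma sum_mul_shiftedUtProd (hq : IsPrimitiveRoot q N) (t z : ℕ) (f : Fin N → ℂ) :
    ∑ k : Fin (t + 1) → Fin N, f (k 0) *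
        (qPoch q q (k (Fin.last t)) ^ 2 * q ^ (k (Fin.last t) + 1 : ℕ) *
          shiftedUtProd q z t (fun i ↦ k i)) =
      ∑ κ : Fin N, f κ *
        (q ^ (κ + 1 : ℕ) * tailSum q N ((transferOp q)^[t] (Pi.single 0 1)) (q ^ z) κ) := by
  induction t generalizing z f with
  | zero =>
    refine Fintype.sum_equiv (Equiv.funUnique (Fin 1) (Fin N)) _ _ fun k ↦ ?_
    simp [shiftedUtProd, tailSum_single_zero, mul_comm]
  | succ t ih =>
    rw [← (Fin.consEquiv fun _ ↦ Fin N).sum_comp, Fintype.sum_prod_type]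
    refine sum_congr rfl fun κ _ ↦ ?_
    rw [Function.iterate_succ_apply', ← sum_qBinom_mul_tailSum hq, ← ih, mul_sum]
    refine sum_congr rfl fun k _ ↦ ?_
    simp only [Fin.consEquiv_apply, Fin.cons_zero, ← Fin.succ_last, Fin.cons_succ,
      shiftedUtProd_succ, ← Fin.succ_zero_eq_one]
    ring

lemma sum_mul_FtProd (hq : IsPrimitiveRoot q N) (t : ℕ) (g : Fin N → ℂ) :
    ∑ k : Fin (t + 1) → Fin N, g (k (Fin.last t)) * FtProd q⁻¹ t (fun i ↦ k i) =
      ∑ κ : Fin N, g κ * (qPoch q q κ * (transferOp q)^[t + 1] (Pi.single 0 1) κ) := by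
  induction t generalizing g with
  | zero =>
    refine Fintype.sum_equiv (Equiv.funUnique (Fin 1) (Fin N)) _ _ fun k ↦ ?_
    have := qPoch_self_ne_zero_of_lt hq (k 0).2
    simp [FtProd, transferOp_single_zero, this]
  | succ t ih =>
    rw [← (Fin.snocEquiv fun _ ↦ Fin N).sum_comp, Fintype.sum_prod_type]
    refine sum_congr rfl fun l _ ↦ ?_
    rw [Function.iterate_succ_apply', ← sum_qBinom_inv_mul_eq_transferOp hq, ← ih, mul_sum]
    refine sum_congr rfl fun k _ ↦ ?_
    simp only [Fin.snocEquiv_apply, Fin.snoc_last, Fin.snoc_castSucc, FtProd_succ]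
    ring

lemma le_of_FtProd_ne_zero {t : ℕ} {k : Fin (t + 1) → ℕ} (hk : FtProd q t k ≠ 0) (i : Fin t) :
    k i.castSucc ≤ k i.succ := by
  by_contra! hlt
  refine hk (prod_eq_zero (mem_univ i) ?_)
  rw [qBinom_of_lt _ (by omega), mul_zero]

lemma le_of_UtProd_ne_zero {t : ℕ} {K : Fin (t + 1) → ℕ} (hK : UtProd q t K ≠ 0) (i : Fin t) :
    K i.castSucc ≤ K i.succ := by
  by_contra! hlt
  refine hK (prod_eq_zero (mem_univ i) ?_)
  rw [qBinom_of_neg _ _ (by omega), mul_zero]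

end Tuples

theorem stmt0_general (t : ℕ) {N : ℕ} {ζ : ℂ} (hζ : IsPrimitiveRoot ζ N) :
    ζ⁻¹ ^ (t + 1) *
      ∑ k : Fin (t + 1) → Fin N with ∀ i : Fin t, k i.castSucc ≤ k i.succ,
        qPoch ζ⁻¹ ζ⁻¹ (k (Fin.last t) : ℕ) * FtProd ζ⁻¹ t (fun i => (k i : ℕ)) =
    ζ⁻¹ ^ (t + 1) *
      ∑ k : Fin (t + 1) → Fin N with ∀ i : Fin t, k i.castSucc ≤ k i.succ,
        qPoch ζ ζ (k (Fin.last t) : ℕ) ^ 2 * ζ ^ ((k (Fin.last t) : ℕ) + 1) *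
          UtProd ζ t (fun i => (k i : ℕ) + 1) := by
  have hF : ∑ k : Fin (t + 1) → Fin N with ∀ i : Fin t, k i.castSucc ≤ k i.succ,
      qPoch ζ⁻¹ ζ⁻¹ (k (Fin.last t) : ℕ) * FtProd ζ⁻¹ t (fun i => (k i : ℕ)) =
      tailSum ζ N ((transferOp ζ)^[t + 1] (Pi.single 0 1)) ζ⁻¹ 0 := by
    refine (sum_filter_of_ne fun k _ hk ↦
      le_of_FtProd_ne_zero (right_ne_zero_of_mul hk)).trans ?_
    rw [sum_mul_FtProd hζ t fun k ↦ qPoch ζ⁻¹ ζ⁻¹ k, tailSum_inv_zero_eq_sum hζ,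
      ← Fin.sum_univ_eq_sum_range]
  have hU : ∑ k : Fin (t + 1) → Fin N with ∀ i : Fin t, k i.castSucc ≤ k i.succ,
      qPoch ζ ζ (k (Fin.last t) : ℕ) ^ 2 * ζ ^ ((k (Fin.last t) : ℕ) + 1) *
        UtProd ζ t (fun i => (k i : ℕ) + 1) =
      tailSum ζ N ((transferOp ζ)^[t + 1] (Pi.single 0 1)) ζ⁻¹ 0 := by
    refine (sum_filter_of_ne fun k _ hk i ↦
      Nat.le_of_succ_le_succ (le_of_UtProd_ne_zero (right_ne_zero_of_mul hk) i)).trans ?_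
    rw [Function.iterate_succ_apply', ← sum_pow_mul_tailSum_one hζ, ← Fin.sum_univ_eq_sum_range]
    simpa [UtProd_succ_eq_shiftedUtProd] using sum_mul_shiftedUtProd hζ t 0 1
  rw [hF, hU]

/-- For integers `t ≥ 1` (here `t+1`) and `N ≥ 1`, with `ζ = exp(2πi/N)`,
`F_t(ζ⁻¹) = U_t(-1; ζ)`, both sides written as finite sums over weakly increasing
integer tuples. -/
theorem stmt0 (t N : ℕ) (hN : 1 ≤ N) (ζ : ℂ)
    (hζ : ζ = Complex.exp (2 * Real.pi * Complex.I / N)) :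
    ζ⁻¹ ^ (t + 1) *
      ∑ k ∈ Finset.univ.filter
          (fun k : Fin (t+1) → Fin N => ∀ i : Fin t, k i.castSucc ≤ k i.succ),
        qPoch ζ⁻¹ ζ⁻¹ (k (Fin.last t) : ℕ) * FtProd ζ⁻¹ t (fun i => (k i : ℕ)) =
    ζ⁻¹ ^ (t + 1) *
      ∑ k ∈ Finset.univ.filter
          (fun k : Fin (t+1) → Fin N => ∀ i : Fin t, k i.castSucc ≤ k i.succ),
        qPoch ζ ζ (k (Fin.last t) : ℕ) ^ 2 * ζ ^ ((k (Fin.last t) : ℕ) + 1) *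
          UtProd ζ t (fun i => (k i : ℕ) + 1) := by
  exact stmt0_general t (hζ ▸ Complex.isPrimitiveRoot_exp N (by omega))
end

section
/- Let t ≥ 1 and n ≥ 1 be integers and let q ∈ ℂ with 0 < |q| < 1. Then Σ_{ℓ=0}^{n} [ q^{(t+1)ℓ^2 - ℓ} (1 - q^{2ℓ}) / ((q;q)_{n-ℓ} (q;q)_{n+ℓ}) ] · Σ_{k=-ℓ}^{ℓ-1} (-1)^k q^{-(2t+1)k(k+1)/2 + k} = Σ_{n ≥ n_{2t-1} ≥ n_{2t-2} ≥ … ≥ n_1 ≥ 0} (-1)^{n_t} (1 - q^{n_t - χ(t ≥ 2)·n_{t-1}}) · q^{Σ_{i=1}^{t-1} n_{t+i}^2 + n_t(n_t-1)/2 - Σ_{i=1}^{t-1} n_i n_{i+1} - Σ_{i=1}^{t-2} n_i} / ( (q;q)_{n - n_{2t-1}} (q;q)_{n_{2t-1} - n_{2t-2}} ⋯ (q;q)_{n_2 - n_1} (q;q)_{n_1} ), where the right-hand sum is over all weakly decreasing (2t-1)-tuples of nonnegative integers bounded above by n. (The left-hand side equals -q^{t-n} C_{n-1}(T*_{(2,2t+1)};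 q), the coefficient in the cyclotomic expansion of the colored Jones polynomial of the left-handed torus knot T*_{(2,2t+1)}.) -/
open Finset

/-- The summand of the right-hand multisum, for a weakly decreasing tuple
`n ≥ n_{2t-1} ≥ … ≥ n_1 ≥ 0`; here the paper's `t` equals `t+1`, the tuple has
length `2t+1`, and `A j = n_{j+1}` (0-based). -/
noncomputable def CTerm (q : ℂ) (t n : ℕ) (A : ℕ → ℕ) : ℂ :=
  (-1 : ℂ) ^ (A t) *
  (1 - q ^ ((A t : ℤ) - (if 1 ≤ t then (A (t - 1) : ℤ) else 0))) *
  q ^ ((∑ i ∈ Finset.range t, (A (t + 1 + i) : ℤ) ^ 2)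
      + (A t : ℤ) * ((A t : ℤ) - 1) / 2
      - (∑ i ∈ Finset.range t, (A i : ℤ) * (A (i + 1) : ℤ))
      - (∑ i ∈ Finset.range (t - 1), (A i : ℤ))) /
  (qPoch q q (n - A (2 * t)) *
    (∏ i ∈ Finset.range (2 * t), qPoch q q (A (i + 1) - A i)) *
    qPoch q q (A 0))

/-!
Summing over `n_1`, then `n_2`, and so on, the right-hand side becomes an iterated sum in which
every step is a Bailey-lemma step. Start from the unit Bailey pair relative to `a = q⁻¹` in base
`q⁻¹`. The steps with exponent `-n_i n_{i+1} - n_i` are Bailey steps in base `q⁻¹`, and so is the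
step that carries the factor `1 - q ^ (n_t - n_{t-1})`, at the price of shifting the index by one.
Passing back to base `q` by duality and undoing the shift turns a pair relative to `a = q` into one
relative to `a = 1`, whose `α` is a partial sum: this creates the inner sum of the left-hand side.
The remaining steps, with exponents `n_i ^ 2`, are ordinary Bailey steps relative to `a = 1`, and
the Bailey pair relation at the end of the chain is the left-hand side.
-/

namespace TorusKnot

theorem not_isOfFinOrder_inv {G : Type*} [DivisionMonoid G] {q : G} (hfin : ¬IsOfFinOrder q) :
    ¬IsOfFinOrder q⁻¹ := by
  simpa only [isOfFinOrder_iff_pow_eq_one, inv_pow, inv_eq_one] using hfin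

theorem one_sub_pow_ne_zero {R : Type*} [Ring R] {q : R} (hfin : ¬IsOfFinOrder q) {k : ℕ}
    (hk : 0 < k) : 1 - q ^ k ≠ 0 :=
  fun h ↦ hfin (isOfFinOrder_iff_pow_eq_one.mpr ⟨k, hk, (sub_eq_zero.mp h).symm⟩)

theorem prod_zpow_eq_zpow_sum {ι G : Type*} [CommGroupWithZero G] {q : G} (hq : q ≠ 0) (f : ι → ℤ)
    (u : Finset ι) : ∏ i ∈ u, q ^ f i = q ^ ∑ i ∈ u, f i := by
  classical
  induction u using Finset.induction_on with
  | empty => simp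
  | insert i u hi ih => rw [prod_insert hi, sum_insert hi, ih, zpow_add₀ hq]

theorem sum_Icc_neg {M : Type*} [AddCommMonoid M] (f : ℤ → M) (l : ℕ) :
    ∑ k ∈ Icc (-(l : ℤ)) (l - 1), f k = ∑ r ∈ range l, (f r + f (-(r + 1))) := by
  induction l with
  | zero => simp
  | succ l ih =>
    have hIcc : Icc (-((l + 1 : ℕ) : ℤ)) ((l + 1 : ℕ) - 1) =
        insert (l : ℤ) (insert (-((l : ℤ) + 1)) (Icc (-(l : ℤ)) (l - 1))) := by
      ext x
      simp only [mem_Icc, mem_insert]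
      lia
    rw [hIcc, sum_insert (by grind), sum_insert (by grind), ih, sum_range_succ,
      add_comm (∑ _ ∈ _, _), add_assoc]

/-! ### Sums over weakly increasing chains -/

/-- The total weight of the paths `0 = b 0, b 1, …, b k = x` of length `k`, where the step from
`b i = y` to `b (i + 1) = x` is weighted by `W i y x` and restricted to `y ≤ x`. -/
def chainSum {R : Type*} [CommSemiring R] (W : ℕ → ℕ → ℕ → R) : ℕ → ℕ → R
  | 0, x => if x = 0 then 1 else 0
  | k + 1, x => ∑ y ∈ range (x + 1), W k y x * chainSum W k y

theorem chainSum_succ {R : Type*} [CommSemiring R] (W : ℕ → ℕ → ℕ → R) (k x : ℕ) :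
    chainSum W (k + 1) x = ∑ y ∈ range (x + 1), W k y x * chainSum W k y := rfl

/-- The path `0, a 0, …, a (k - 1), x, x, …` with interior vertices `a`. -/
def padPath {k : ℕ} (a : Fin k → ℕ) (x : ℕ) : ℕ → ℕ
  | 0 => 0
  | j + 1 => if h : j < k then a ⟨j, h⟩ else x

theorem padPath_succ_self {k : ℕ} (a : Fin k → ℕ) (x : ℕ) : padPath a x (k + 1) = x :=
  dif_neg (lt_irrefl k)

theorem padPath_snoc {k : ℕ} (a : Fin k → ℕ) (x y : ℕ) {j : ℕ} (hj : j ≤ k + 1) :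
    padPath (Fin.snoc a y : Fin (k + 1) → ℕ) x j = padPath a y j := by
  cases j with
  | zero => rfl
  | succ j =>
    rw [padPath, padPath, dif_pos (by lia)]
    simp only [Fin.snoc, Fin.castLT, cast_eq]

theorem chainSum_eq_sum_prod {R : Type*} [CommSemiring R] {W : ℕ → ℕ → ℕ → R}
    (hW : ∀ i x y, x < y → W i y x = 0) (k : ℕ) {n x : ℕ} (hx : x ≤ n) :
    chainSum W (k + 1) x = ∑ a : Fin k → Fin (n + 1),
      ∏ i ∈ range (k + 1), W i (padPath (fun j ↦ a j) x i) (padPath (fun j ↦ a j) x (i + 1)) := by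
  induction k generalizing x with
  | zero => simp [chainSum, padPath]
  | succ k ih =>
    have hext : chainSum W (k + 2) x =
        ∑ y : Fin (n + 1), W (k + 1) y x * chainSum W (k + 1) y := by
      rw [chainSum_succ, Fin.sum_univ_eq_sum_range (fun y ↦ W (k + 1) y x * chainSum W (k + 1) y)]
      refine sum_subset (range_mono (by lia)) fun y _ hy ↦ ?_
      rw [hW _ _ _ (by grind), zero_mul]
    rw [hext, ← (Fin.snocEquiv fun _ : Fin (k + 1) ↦ Fin (n + 1)).sum_comp,
      Fintype.sum_prod_type]
    refine sum_congr rfl fun y _ ↦ ?_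
    rw [ih (Fin.is_le y), mul_sum]
    refine sum_congr rfl fun a _ ↦ ?_
    have hsnoc : (fun j ↦ (Fin.snocEquiv (fun _ ↦ Fin (n + 1)) (y, a) j : ℕ)) =
        Fin.snoc (fun j ↦ (a j : ℕ)) (y : ℕ) := by
      ext j
      refine Fin.lastCases ?_ (fun j ↦ ?_) j <;> simp [Fin.snocEquiv]
    rw [hsnoc, prod_range_succ _ (k + 1), padPath_succ_self, padPath_snoc _ _ _ le_rfl,
      padPath_succ_self, mul_comm]
    congr 1
    refine prod_congr rfl fun i hi ↦ ?_
    rw [padPath_snoc _ _ _ (by grind), padPath_snoc _ _ _ (by grind)]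

theorem padPath_castSucc {k : ℕ} (a : Fin (k + 1) → ℕ) (x : ℕ) (i : Fin k) :
    padPath a x (i + 1) = a i.castSucc :=
  dif_pos (by lia)

theorem padPath_succ {k : ℕ} (a : Fin (k + 1) → ℕ) (x : ℕ) (i : Fin k) :
    padPath a x (i + 2) = a i.succ :=
  dif_pos (by lia)

theorem padPath_le_padPath_succ {k n : ℕ} {a : Fin (k + 1) → Fin (n + 1)}
    (ha : ∀ i : Fin k, a i.castSucc ≤ a i.succ) {i : ℕ} (hi : i < k + 2) :
    padPath (fun j ↦ a j) n i ≤ padPath (fun j ↦ a j) n (i + 1) := by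
  rcases i with _ | i
  · exact Nat.zero_le _
  rcases lt_or_ge i k with hik | hik
  · rw [padPath_castSucc _ _ ⟨i, hik⟩, padPath_succ _ _ ⟨i, hik⟩]
    exact ha ⟨i, hik⟩
  · obtain rfl : i = k := by lia
    rw [padPath_succ_self, padPath, dif_pos (Nat.lt_succ_self i)]
    exact Fin.is_le _

theorem chainSum_eq_sum_monotone {R : Type*} [CommSemiring R] {W : ℕ → ℕ → ℕ → R}
    (hW : ∀ i x y, x < y → W i y x = 0) (k n : ℕ) :
    chainSum W (k + 2) n =
      ∑ a : Fin (k + 1) → Fin (n + 1) with ∀ i : Fin k, a i.castSucc ≤ a i.succ,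
        ∏ i ∈ range (k + 2),
          W i (padPath (fun j ↦ a j) n i) (padPath (fun j ↦ a j) n (i + 1)) := by
  rw [chainSum_eq_sum_prod hW (k + 1) le_rfl, sum_filter_of_ne]
  intro a _ hne i
  by_contra! hlt
  refine hne (prod_eq_zero (i := (i : ℕ) + 1) (by grind) (hW _ _ _ ?_))
  rw [padPath_castSucc, padPath_succ]
  exact hlt

/-! ### Bailey pairs -/

/-- Triangular numbers, extended to `ℤ` so that exponents of `q` need no truncated subtraction. -/
def triangle (k : ℤ) : ℤ := k * (k + 1) / 2

theorem two_mul_triangle (k : ℤ) : 2 * triangle k = k * (k + 1) :=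
  Int.mul_ediv_cancel' (Int.even_mul_succ_self k).two_dvd

theorem triangle_add_one (k : ℤ) : triangle (k + 1) = triangle k + (k + 1) := by
  linarith [two_mul_triangle k, two_mul_triangle (k + 1)]

theorem triangle_neg_add_one (k : ℤ) : triangle (-(k + 1)) = triangle k := by
  linarith [two_mul_triangle k, two_mul_triangle (-(k + 1))]

/-- The reciprocal `1 / (q;q)_k`, with the convention `1 / (q;q)_k = 0` for `k < 0`. This makes
`(1 - q ^ k) / (q;q)_k = 1 / (q;q)_{k-1}` valid for every integer `k`. -/
noncomputable def invQFact (q : ℂ) : ℤ → ℂ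
  | .ofNat k => (qPoch q q k)⁻¹
  | .negSucc _ => 0

theorem invQFact_natCast (q : ℂ) (k : ℕ) : invQFact q k = (qPoch q q k)⁻¹ := rfl

theorem invQFact_of_neg (q : ℂ) {k : ℤ} (hk : k < 0) : invQFact q k = 0 := by
  obtain ⟨m, rfl⟩ := Int.eq_negSucc_of_lt_zero hk
  rfl

theorem invQFact_zero (q : ℂ) : invQFact q 0 = 1 := by
  simpa [qPoch] using invQFact_natCast q 0

theorem qPoch_succ (q a : ℂ) (k : ℕ) : qPoch q a (k + 1) = qPoch q a k * (1 - a * q ^ k) :=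
  prod_range_succ _ _

section Bailey

variable {q : ℂ}

theorem one_sub_zpow_mul_invQFact (hfin : ¬IsOfFinOrder q) (k : ℤ) :
    (1 - q ^ k) * invQFact q k = invQFact q (k - 1) := by
  rcases lt_trichotomy k 0 with hk | rfl | hk
  · rw [invQFact_of_neg q hk, invQFact_of_neg q (by lia), mul_zero]
  · rw [zpow_zero, sub_self, zero_mul, invQFact_of_neg q (by norm_num)]
  · obtain ⟨m, rfl⟩ : ∃ m : ℕ, k = (m + 1 : ℕ) := ⟨(k - 1).toNat, by lia⟩
    have hm : 1 - q ^ (m + 1) ≠ 0 := one_sub_pow_ne_zero hfin m.succ_pos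
    rw [Nat.cast_succ, add_sub_cancel_right, ← Nat.cast_succ, invQFact_natCast, invQFact_natCast,
      qPoch_succ, ← pow_succ', zpow_natCast, mul_inv, mul_left_comm, mul_inv_cancel₀ hm, mul_one]

theorem invQFact_inv (hq : q ≠ 0) (k : ℤ) :
    invQFact q⁻¹ k = (-1) ^ k * q ^ triangle k * invQFact q k := by
  rcases lt_or_ge k 0 with hk | hk
  · rw [invQFact_of_neg _ hk, invQFact_of_neg _ hk, mul_zero]
  lift k to ℕ using hk
  induction k with
  | zero => simp [invQFact_zero, triangle]
  | succ k ih =>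
    have hfactor : (1 - q⁻¹ * q⁻¹ ^ k)⁻¹ = -q ^ (k + 1) * (1 - q * q ^ k)⁻¹ := by
      have : 1 - q⁻¹ * q⁻¹ ^ k = -(q ^ (k + 1))⁻¹ * (1 - q * q ^ k) := by
        rw [inv_pow, pow_succ]
        field_simp
        ring
      rw [this, mul_inv, inv_neg, inv_inv]
    have hpow : q ^ triangle (k + 1 : ℕ) = q ^ triangle k * q ^ (k + 1) := by
      rw [← zpow_natCast q, ← zpow_add₀ hq, Nat.cast_succ, triangle_add_one]
    simp only [invQFact_natCast, zpow_natCast] at ih ⊢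
    rw [qPoch_succ, qPoch_succ, mul_inv, mul_inv, ih, hfactor, hpow, pow_succ (-1 : ℂ)]
    ring

/-- The summand of the limiting `q`-Chu–Vandermonde sum. -/
noncomputable def vandermondeTerm (q : ℂ) (M c j : ℤ) : ℂ :=
  q ^ (j ^ 2 + c * j) * invQFact q (M - j) * invQFact q j * invQFact q (c + j)

-- Split `1 - q^(M+1) = (1 - q^(M+1-j)) + q^(M+1-j) (1 - q^j)`.
theorem one_sub_zpow_mul_vandermondeTerm (hq : q ≠ 0) (hfin : ¬IsOfFinOrder q) (M c j : ℤ) :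
    (1 - q ^ (M + 1)) * vandermondeTerm q (M + 1) c j =
      vandermondeTerm q M c j + q ^ (M + 1 + c) * vandermondeTerm q M (c + 1) (j - 1) := by
  have hMj := one_sub_zpow_mul_invQFact hfin (M + 1 - j)
  have hj := one_sub_zpow_mul_invQFact hfin j
  have hsplit : q ^ (M + 1) = q ^ (M + 1 - j) * q ^ j := by
    rw [← zpow_add₀ hq, sub_add_cancel]
  have hpow : q ^ (M + 1 + c) * q ^ ((j - 1) ^ 2 + (c + 1) * (j - 1)) =
      q ^ (M + 1 - j) * q ^ (j ^ 2 + c * j) := by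
    rw [← zpow_add₀ hq, ← zpow_add₀ hq]
    congr 1
    ring
  simp only [vandermondeTerm]
  rw [show M - (j - 1) = M + 1 - j by ring, show c + 1 + (j - 1) = c + j by ring,
    show M - j = M + 1 - j - 1 by ring, ← hMj, ← hj, hsplit]
  linear_combination (-((1 - q ^ j) * invQFact q (M + 1 - j) * invQFact q j *
    invQFact q (c + j))) * hpow

theorem sum_vandermondeTerm (hq : q ≠ 0) (hfin : ¬IsOfFinOrder q) (M : ℕ) (c : ℤ) :
    ∑ j ∈ range (M + 1), vandermondeTerm q M c j = invQFact q M * invQFact q (M + c) := by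
  induction M generalizing c with
  | zero => simp [vandermondeTerm, invQFact_zero]
  | succ M ih =>
    have hM : 1 - q ^ ((M : ℤ) + 1) ≠ 0 := by
      exact_mod_cast one_sub_pow_ne_zero hfin M.succ_pos
    have hlast : vandermondeTerm q M c (M + 1 : ℕ) = 0 := by
      simp [vandermondeTerm, invQFact_of_neg]
    have hfirst : vandermondeTerm q M (c + 1) ((0 : ℕ) - 1) = 0 := by
      simp [vandermondeTerm, invQFact_of_neg]
    have hrec := one_sub_zpow_mul_invQFact hfin (M + 1)
    have hrec' := one_sub_zpow_mul_invQFact hfin (M + 1 + c)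
    rw [add_sub_cancel_right] at hrec
    rw [show (M : ℤ) + 1 + c - 1 = M + c by ring] at hrec'
    apply mul_left_cancel₀ hM
    simp only [Nat.cast_succ M, mul_sum, one_sub_zpow_mul_vandermondeTerm hq hfin]
    rw [sum_add_distrib, ← mul_sum, sum_range_succ, sum_range_succ' _ (M + 1), hlast, hfirst]
    simp only [Nat.cast_succ, add_sub_cancel_right]
    rw [ih c, ih (c + 1), show (M : ℤ) + (c + 1) = M + 1 + c by ring, ← hrec, ← hrec']
    ring

/-- The kernel `1 / ((q;q)_{N-r} (q;q)_{N+r+s})` relating a Bailey pair relative to `a = q ^ s`. It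
is the usual `1 / ((q;q)_{N-r} (aq;q)_{N+r})` divided by the constant `(q;q)_s`. -/
noncomputable def baileyKernel (q : ℂ) (s N r : ℤ) : ℂ :=
  invQFact q (N - r) * invQFact q (N + r + s)

theorem sum_Ico_mul_baileyKernel (hq : q ≠ 0) (hfin : ¬IsOfFinOrder q) (s : ℤ) {r N : ℕ}
    (hrN : r ≤ N) :
    ∑ y ∈ Ico r (N + 1), q ^ ((y : ℤ) ^ 2 + s * y) * invQFact q (N - y) * baileyKernel q s y r =
      q ^ ((r : ℤ) ^ 2 + s * r) * baileyKernel q s N r := by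
  obtain ⟨M, rfl⟩ := Nat.exists_eq_add_of_le hrN
  have hM := sum_vandermondeTerm hq hfin M (2 * r + s)
  rw [baileyKernel, show ((r + M : ℕ) : ℤ) - r = M by push_cast; ring,
    show ((r + M : ℕ) : ℤ) + r + s = M + (2 * r + s) by push_cast; ring, ← hM, mul_sum,
    sum_Ico_eq_sum_range, show r + M + 1 - r = M + 1 by lia]
  refine sum_congr rfl fun j _ ↦ ?_
  have hpow : q ^ (((r + j : ℕ) : ℤ) ^ 2 + s * (r + j : ℕ)) =
      q ^ ((r : ℤ) ^ 2 + s * r) * q ^ ((j : ℤ) ^ 2 + (2 * r + s) * j) := by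
    rw [← zpow_add₀ hq]
    congr 1
    push_cast
    ring
  rw [vandermondeTerm, baileyKernel, hpow,
    show ((r + M : ℕ) : ℤ) - (r + j : ℕ) = M - j by push_cast; ring,
    show ((r + j : ℕ) : ℤ) - r = j by push_cast; ring,
    show ((r + j : ℕ) : ℤ) + r + s = 2 * r + s + j by push_cast; ring]
  ring

theorem baileyKernel_inv (hq : q ≠ 0) (s N r : ℤ) :
    baileyKernel q⁻¹ s N r =
      (-1) ^ s * q ^ (N ^ 2 + (s + 1) * N + triangle s + r ^ 2 + s * r) * baileyKernel q s N r := by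
  have hsign : (-1 : ℂ) ^ s = (-1) ^ (N - r) * (-1) ^ (N + r + s) := by
    rw [← zpow_add₀ (by norm_num), show N - r + (N + r + s) = s + (N + N) by ring,
      zpow_add₀ (by norm_num), Even.neg_one_zpow ⟨N, rfl⟩, mul_one]
  have hpow : q ^ (N ^ 2 + (s + 1) * N + triangle s + r ^ 2 + s * r) =
      q ^ triangle (N - r) * q ^ triangle (N + r + s) := by
    rw [← zpow_add₀ hq]
    congr 1
    linarith [two_mul_triangle s, two_mul_triangle (N - r), two_mul_triangle (N + r + s)]
  rw [baileyKernel, baileyKernel, invQFact_inv hq, invQFact_inv hq, hsign, hpow]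
  ring

/-- `(α, β)` is a Bailey pair relative to `a = q ^ s`, normalized through `baileyKernel`. -/
def IsBaileyPair (q : ℂ) (s : ℤ) (α β : ℕ → ℂ) : Prop :=
  ∀ N : ℕ, β N = ∑ r ∈ range (N + 1), α r * baileyKernel q s N r

variable {s : ℤ} {α β : ℕ → ℂ}

theorem IsBaileyPair.bailey_lemma (h : IsBaileyPair q s α β) (hq : q ≠ 0)
    (hfin : ¬IsOfFinOrder q) :
    IsBaileyPair q s (fun r ↦ q ^ ((r : ℤ) ^ 2 + s * r) * α r)
      (fun N ↦ ∑ y ∈ range (N + 1), q ^ ((y : ℤ) ^ 2 + s * y) * invQFact q (N - y) * β y) := by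
  intro N
  simp only [h _, mul_sum, range_eq_Ico]
  rw [← sum_Ico_Ico_comm]
  refine sum_congr rfl fun r hr ↦ ?_
  rw [mul_assoc, mul_left_comm, ← sum_Ico_mul_baileyKernel hq hfin s (by grind), mul_sum]
  exact sum_congr rfl fun y _ ↦ by ring

theorem IsBaileyPair.dual (h : IsBaileyPair q⁻¹ s α β) (hq : q ≠ 0) :
    IsBaileyPair q s (fun r ↦ q ^ ((r : ℤ) ^ 2 + s * r) * α r)
      (fun N ↦ (-1) ^ s * q ^ (-((N : ℤ) ^ 2 + (s + 1) * N + triangle s)) * β N) := by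
  intro N
  simp only [h N, mul_sum]
  refine sum_congr rfl fun r _ ↦ ?_
  have hsign : (-1 : ℂ) ^ s * (-1) ^ s = 1 := by rw [← mul_zpow]; norm_num
  have hpow : q ^ (-((N : ℤ) ^ 2 + (s + 1) * N + triangle s)) *
      q ^ ((N : ℤ) ^ 2 + (s + 1) * N + triangle s + r ^ 2 + s * r) =
        q ^ ((r : ℤ) ^ 2 + s * r) := by
    rw [← zpow_add₀ hq]
    congr 1
    ring
  rw [baileyKernel_inv hq, ← hpow]
  linear_combination (q ^ (-((N : ℤ) ^ 2 + (s + 1) * N + triangle s)) *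
    q ^ ((N : ℤ) ^ 2 + (s + 1) * N + triangle s + r ^ 2 + s * r) * α r *
      baileyKernel q s N r) * hsign

-- In base `q⁻¹` the Gaussian factors of `1 / (q⁻¹;q⁻¹)_{N-y}` and of `γ y` cancel `q^{-y²}`.
theorem IsBaileyPair.inv_bailey_lemma {γ : ℕ → ℂ}
    (h : IsBaileyPair q⁻¹ s α (fun x ↦ (-1) ^ x * q ^ triangle x * γ x)) (hq : q ≠ 0)
    (hfin : ¬IsOfFinOrder q) :
    IsBaileyPair q⁻¹ s (fun r ↦ q⁻¹ ^ ((r : ℤ) ^ 2 + s * r) * α r)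
      (fun x ↦ (-1) ^ x * q ^ triangle x *
        ∑ y ∈ range (x + 1), q ^ (-((x : ℤ) * y + s * y)) * invQFact q (x - y) * γ y) := by
  convert h.bailey_lemma (inv_ne_zero hq) (not_isOfFinOrder_inv hfin) using 2 with x
  rw [mul_sum]
  refine sum_congr rfl fun y _ ↦ ?_
  have hsign : (-1 : ℂ) ^ ((x : ℤ) - y) * (-1) ^ y = (-1) ^ x := by
    rw [← zpow_natCast, ← zpow_natCast, ← zpow_add₀ (by norm_num), sub_add_cancel]
  have hpow : q⁻¹ ^ ((y : ℤ) ^ 2 + s * y) * q ^ triangle (x - y) * q ^ triangle y =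
      q ^ triangle x * q ^ (-((x : ℤ) * y + s * y)) := by
    rw [inv_zpow', ← zpow_add₀ hq, ← zpow_add₀ hq, ← zpow_add₀ hq]
    congr 1
    linarith [two_mul_triangle x, two_mul_triangle y, two_mul_triangle (x - y)]
  rw [invQFact_inv hq, ← hsign]
  linear_combination (-((-1 : ℂ) ^ ((x : ℤ) - y) * (-1) ^ y * invQFact q (x - y) * γ y)) * hpow

/-- The sequence `α` of the unit Bailey pair relative to `q`. -/
noncomputable def unitAlpha (q : ℂ) (r : ℕ) : ℂ :=
  (-1) ^ r * q ^ (triangle r - r) * (1 - q ^ (2 * (r : ℤ) + 1))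

theorem one_sub_zpow_mul_sum_unitAlpha (hq : q ≠ 0) (hfin : ¬IsOfFinOrder q) (N : ℤ) (m : ℕ) :
    (1 - q ^ N) * ∑ r ∈ range m, unitAlpha q r * baileyKernel q 1 N r =
      -(-1) ^ m * q ^ (triangle m - m) * (1 - q ^ m) * baileyKernel q 0 N m := by
  induction m with
  | zero => simp
  | succ m ih =>
    have hlow := one_sub_zpow_mul_invQFact hfin (N - m)
    have hhigh := one_sub_zpow_mul_invQFact hfin (N + m + 1)
    rw [add_sub_cancel_right] at hhigh
    have htri : q ^ (triangle (m + 1 : ℕ) - (m + 1 : ℕ)) = q ^ (triangle m - m) * q ^ m := by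
      rw [← zpow_natCast q m, ← zpow_add₀ hq, Nat.cast_succ, triangle_add_one, add_sub_cancel_right,
        sub_add_cancel]
    have hodd : q ^ (2 * (m : ℤ) + 1) = q ^ m * q ^ m * q := by
      rw [zpow_add_one₀ hq, two_mul, zpow_add₀ hq, zpow_natCast]
    have hN : q ^ N = q ^ (N - m) * q ^ m := by
      rw [← zpow_natCast q m, ← zpow_add₀ hq, sub_add_cancel]
    have hNm : q ^ (N + m + 1) = q ^ (N - m) * q ^ m * q ^ m * q := by
      rw [zpow_add_one₀ hq, zpow_add₀ hq, hN, zpow_natCast]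
    simp only [baileyKernel, add_zero] at ih ⊢
    rw [sum_range_succ, mul_add, ih, unitAlpha, ← hhigh,
      show N - ((m + 1 : ℕ) : ℤ) = N - m - 1 by push_cast; ring, ← hlow,
      show N + ((m + 1 : ℕ) : ℤ) = N + m + 1 by push_cast; ring, htri, hodd, hN, hNm]
    ring

theorem isBaileyPair_unit (hq : q ≠ 0) (hfin : ¬IsOfFinOrder q) :
    IsBaileyPair q 1 (unitAlpha q) (fun N ↦ if N = 0 then 1 else 0) := by
  intro N
  dsimp only
  split_ifs with hN
  · have h := one_sub_zpow_mul_invQFact hfin 1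
    simp only [zpow_one, sub_self, invQFact_zero] at h
    simp [hN, unitAlpha, triangle, baileyKernel, invQFact_zero, h]
  · have h := one_sub_zpow_mul_sum_unitAlpha hq hfin N (N + 1)
    rw [baileyKernel, invQFact_of_neg q (by lia : (N : ℤ) - (N + 1 : ℕ) < 0), zero_mul, mul_zero,
      zpow_natCast] at h
    exact ((mul_eq_zero_iff_left (one_sub_pow_ne_zero hfin (Nat.pos_of_ne_zero hN))).mp h).symm

/-- The sequence `α'` of the Bailey pair relative to `q ^ s` obtained from a pair `(α, β)` relative
to `q ^ (s + 1)` by shifting the index of `β`. -/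
noncomputable def lowerAlpha (q : ℂ) (s : ℤ) (α : ℕ → ℂ) (l : ℕ) : ℂ :=
  q ^ (((l : ℤ) - 1) * (l + s)) * (1 - q ^ (2 * (l : ℤ) + s)) *
    ∑ r ∈ range l, q ^ (-((r : ℤ) * (r + s + 1))) * α r

theorem one_sub_zpow_mul_baileyKernel (hq : q ≠ 0) (hfin : ¬IsOfFinOrder q) (s N l : ℤ) :
    q ^ (l * (l + s + 1)) * (1 - q ^ (2 * (l + 1) + s)) * baileyKernel q s (N + 1) (l + 1) =
      q ^ (l * (l + s + 1)) * baileyKernel q (s + 1) N l -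
        q ^ ((l + 1) * (l + 1 + s + 1)) * baileyKernel q (s + 1) N (l + 1) := by
  have hlow := one_sub_zpow_mul_invQFact hfin (N - l)
  have hhigh := one_sub_zpow_mul_invQFact hfin (N + l + s + 2)
  have hpow : q ^ ((l + 1) * (l + 1 + s + 1)) = q ^ (l * (l + s + 1)) * q ^ (2 * (l + 1) + s) := by
    rw [← zpow_add₀ hq]
    congr 1
    ring
  have hpow' : q ^ (N + l + s + 2) = q ^ (2 * (l + 1) + s) * q ^ (N - l) := by
    rw [← zpow_add₀ hq]
    congr 1
    ring
  simp only [baileyKernel]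
  rw [show N + 1 - (l + 1) = N - l by ring, show N + 1 + (l + 1) + s = N + l + s + 2 by ring,
    show N - (l + 1) = N - l - 1 by ring, show N + (l + 1) + (s + 1) = N + l + s + 2 by ring,
    show N + l + (s + 1) = N + l + s + 2 - 1 by ring, ← hlow, ← hhigh, hpow, hpow']
  ring

theorem IsBaileyPair.lower (h : IsBaileyPair q (s + 1) α β) (hq : q ≠ 0) (hfin : ¬IsOfFinOrder q)
    {β' : ℕ → ℂ} (hzero : β' 0 = 0) (hsucc : ∀ N, β' (N + 1) = β N) :
    IsBaileyPair q s (lowerAlpha q s α) β' := by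
  rintro (_ | N)
  · simp [hzero, lowerAlpha]
  set F : ℕ → ℂ := fun r ↦ q ^ ((r : ℤ) * (r + s + 1)) * baileyKernel q (s + 1) N r with hF
  set g : ℕ → ℂ := fun r ↦ q ^ (-((r : ℤ) * (r + s + 1))) * α r with hg
  have hFlast : F (N + 1) = 0 := by simp [hF, baileyKernel, invQFact_of_neg]
  have hβ : ∑ r ∈ range (N + 1), F r * g r = β N := by
    rw [h N]
    refine sum_congr rfl fun r _ ↦ ?_
    simp only [hF, hg, zpow_neg]
    field_simp [hq]
  have hterm (l : ℕ) : lowerAlpha q s α (l + 1) * baileyKernel q s (N + 1 : ℕ) (l + 1 : ℕ) =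
      (F l - F (l + 1)) * ∑ r ∈ range (l + 1), g r := by
    have := one_sub_zpow_mul_baileyKernel hq hfin s N l
    simp only [lowerAlpha, hF, Nat.cast_succ, ← this]
    rw [show (l : ℤ) + 1 - 1 = l by ring, show (l : ℤ) + 1 + s = l + s + 1 by ring]
    ring
  have hparts := sum_range_by_parts F g (N + 1)
  simp only [smul_eq_mul, Nat.add_sub_cancel, hβ] at hparts
  rw [hsucc, sum_range_succ', lowerAlpha, range_zero, sum_empty, mul_zero, zero_mul, add_zero]
  simp only [hterm]
  have hneg : ∑ x ∈ range N, (F x - F (x + 1)) * ∑ r ∈ range (x + 1), g r =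
      -∑ x ∈ range N, (F (x + 1) - F x) * ∑ r ∈ range (x + 1), g r := by
    simp only [← sum_neg_distrib, ← neg_mul, neg_sub]
  rw [sum_range_succ, hFlast, hparts, hneg]
  ring

end Bailey

/-! ### The multisum as a chain of Bailey steps -/

/-- The weight of the step from `y = n_i` to `x = n_{i+1}` (with `n_0 = 0`) in the multisum, without
the factor `1 / (q;q)_{x-y}`. As in `CTerm`, the paper's `t` is `t + 1`, so the sign and the factor
`q ^ (n_{t+1} (n_{t+1} - 1) / 2)` are carried by the step leaving `n_{t+1}`. -/
noncomputable def edgeWeight (q : ℂ) (t i y x : ℕ) : ℂ :=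
  if i < t then q ^ (-((x : ℤ) * y + y))
  else if i = t then q ^ (-((x : ℤ) * y)) * (1 - q ^ ((x : ℤ) - y))
  else if i = t + 1 then (-1) ^ y * q ^ (triangle y - y)
  else q ^ ((y : ℤ) ^ 2)

/-- The weight `edgeWeight / (q;q)_{x-y}` of a step of the multisum; it vanishes unless `y ≤ x`. -/
noncomputable def chainKernel (q : ℂ) (t i y x : ℕ) : ℂ :=
  edgeWeight q t i y x * invQFact q (x - y)

theorem chainKernel_of_lt (q : ℂ) (t i : ℕ) {x y : ℕ} (hxy : x < y) :
    chainKernel q t i y x = 0 := by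
  rw [chainKernel, invQFact_of_neg q (by lia), mul_zero]

section ChainSum

variable {q : ℂ} {t : ℕ}

theorem isBaileyPair_chainSum_low (hq : q ≠ 0) (hfin : ¬IsOfFinOrder q) {k : ℕ} (hk : k ≤ t) :
    IsBaileyPair q⁻¹ 1 (fun r ↦ q⁻¹ ^ ((k : ℤ) * (r ^ 2 + r)) * unitAlpha q⁻¹ r)
      (fun x ↦ (-1) ^ x * q ^ triangle x * chainSum (chainKernel q t) k x) := by
  induction k with
  | zero =>
    convert isBaileyPair_unit (inv_ne_zero hq) (not_isOfFinOrder_inv hfin) using 2 with r x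
    · simp
    · by_cases hx : x = 0 <;> simp [chainSum, hx, triangle]
  | succ k ih =>
    convert (ih (by lia)).inv_bailey_lemma hq hfin using 2 with r x
    · rw [← mul_assoc, ← zpow_add₀ (inv_ne_zero hq)]
      congr 2
      push_cast
      ring
    · rw [chainSum_succ]
      congr 1
      refine sum_congr rfl fun y _ ↦ ?_
      rw [chainKernel, edgeWeight, if_pos (by lia), one_mul]

theorem chainSum_chainKernel_mid_zero : chainSum (chainKernel q t) (t + 1) 0 = 0 := by
  simp [chainSum_succ, chainKernel, edgeWeight]

-- The factor `1 - q^{x+1-y}` turns `1 / (q;q)_{x+1-y}` into `1 / (q;q)_{x-y}`.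
theorem chainSum_chainKernel_mid_succ (hfin : ¬IsOfFinOrder q) (x : ℕ) :
    chainSum (chainKernel q t) (t + 1) (x + 1) =
      ∑ y ∈ range (x + 1), q ^ (-((x : ℤ) * y + 1 * y)) * invQFact q (x - y) *
        chainSum (chainKernel q t) t y := by
  have hker (y : ℕ) : chainKernel q t t y (x + 1) =
      q ^ (-((x : ℤ) * y + 1 * y)) * invQFact q (x - y) := by
    have h := one_sub_zpow_mul_invQFact hfin ((x + 1 : ℕ) - y)
    rw [show ((x + 1 : ℕ) : ℤ) - y - 1 = x - y by push_cast; ring] at h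
    rw [chainKernel, edgeWeight, if_neg (lt_irrefl t), if_pos rfl, mul_assoc, h]
    congr 3
    push_cast
    ring
  simp only [chainSum_succ _ t, sum_range_succ _ (x + 1), hker]
  rw [invQFact_of_neg q (by lia), mul_zero, zero_mul, add_zero]

/-- The sequence `α` reached after the step that changes the base from `q⁻¹` back to `q`. -/
noncomputable def dualAlpha (q : ℂ) (t r : ℕ) : ℂ :=
  q ^ ((r : ℤ) ^ 2 + r) * (q⁻¹ ^ (((t : ℤ) + 1) * (r ^ 2 + r)) * unitAlpha q⁻¹ r)

theorem isBaileyPair_dualAlpha (hq : q ≠ 0) (hfin : ¬IsOfFinOrder q) :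
    IsBaileyPair q 1 (dualAlpha q t)
      (fun x ↦ -(q ^ (-((x : ℤ) + 1) ^ 2) * ((-1) ^ x * q ^ triangle x *
        chainSum (chainKernel q t) (t + 1) (x + 1)))) := by
  convert ((isBaileyPair_chainSum_low hq hfin (le_refl t)).inv_bailey_lemma hq hfin).dual hq
    using 2 with r x
  · rw [dualAlpha, ← mul_assoc (q⁻¹ ^ _), ← zpow_add₀ (inv_ne_zero hq), one_mul]
    congr 3
    ring
  · rw [chainSum_chainKernel_mid_succ hfin, zpow_one, neg_mul, neg_mul, one_mul]
    congr 3
    rw [show triangle 1 = 1 from rfl]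
    ring

theorem isBaileyPair_lowerAlpha_dualAlpha (hq : q ≠ 0) (hfin : ¬IsOfFinOrder q) :
    IsBaileyPair q 0 (lowerAlpha q 0 (dualAlpha q t))
      (fun x ↦ q ^ (-(x : ℤ) ^ 2) * ((-1) ^ x * q ^ (triangle x - x) *
        chainSum (chainKernel q t) (t + 1) x)) := by
  refine IsBaileyPair.lower (s := 0) (isBaileyPair_dualAlpha hq hfin) hq hfin ?_ fun x ↦ ?_
  · rw [chainSum_chainKernel_mid_zero, mul_zero, mul_zero]
  · rw [Nat.cast_succ, triangle_add_one, add_sub_cancel_right, pow_succ (-1 : ℂ), mul_neg_one,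
      neg_mul, neg_mul, mul_neg]

theorem isBaileyPair_chainSum_high (hq : q ≠ 0) (hfin : ¬IsOfFinOrder q) (j : ℕ) :
    IsBaileyPair q 0 (fun l ↦ q ^ (((j : ℤ) + 1) * l ^ 2) * lowerAlpha q 0 (dualAlpha q t) l)
      (chainSum (chainKernel q t) (t + 2 + j)) := by
  induction j with
  | zero =>
    convert (isBaileyPair_lowerAlpha_dualAlpha (t := t) hq hfin).bailey_lemma hq hfin
      using 2 with l x
    · simp
    · rw [add_zero, chainSum_succ]
      refine sum_congr rfl fun y _ ↦ ?_
      have hpow : q ^ ((y : ℤ) ^ 2 + 0 * y) * q ^ (-(y : ℤ) ^ 2) = 1 := by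
        rw [← zpow_add₀ hq, zero_mul, add_zero, add_neg_cancel, zpow_zero]
      rw [chainKernel, edgeWeight, if_neg (by lia), if_neg (by lia), if_pos rfl]
      linear_combination (-((-1) ^ y * q ^ (triangle y - y) * invQFact q (x - y) *
        chainSum (chainKernel q t) (t + 1) y)) * hpow
  | succ j ih =>
    convert ih.bailey_lemma hq hfin using 2 with l x
    · rw [← mul_assoc, ← zpow_add₀ hq]
      congr 2
      push_cast
      ring
    · rw [← add_assoc, chainSum_succ]
      refine sum_congr rfl fun y _ ↦ ?_
      rw [chainKernel, edgeWeight, if_neg (by lia), if_neg (by lia), if_neg (by lia), zero_mul,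
        add_zero]

end ChainSum

theorem prod_invQFact_sub (q : ℂ) {B : ℕ → ℕ} {m : ℕ} (hB : ∀ i < m, B i ≤ B (i + 1)) :
    ∏ i ∈ range m, invQFact q ((B (i + 1) : ℤ) - B i) =
      (∏ i ∈ range m, qPoch q q (B (i + 1) - B i))⁻¹ := by
  rw [← prod_inv_distrib]
  refine prod_congr rfl fun i hi ↦ ?_
  rw [← Nat.cast_sub (hB i (mem_range.mp hi)), invQFact_natCast]

theorem prod_edgeWeight {q : ℂ} (hq : q ≠ 0) (t : ℕ) (B : ℕ → ℕ) :
    ∏ i ∈ range (2 * t + 2), edgeWeight q t i (B i) (B (i + 1)) =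
      (-1) ^ B (t + 1) * (1 - q ^ ((B (t + 1) : ℤ) - B t)) *
        q ^ ((∑ i ∈ range t, (B (t + 2 + i) : ℤ) ^ 2) + (triangle (B (t + 1)) - B (t + 1)) -
          (∑ i ∈ range (t + 1), (B (i + 1) : ℤ) * B i) - ∑ i ∈ range t, (B i : ℤ)) := by
  have hlow : ∏ i ∈ range t, edgeWeight q t i (B i) (B (i + 1)) =
      q ^ ∑ i ∈ range t, -((B (i + 1) : ℤ) * B i + B i) := by
    rw [← prod_zpow_eq_zpow_sum hq]
    exact prod_congr rfl fun i hi ↦ if_pos (mem_range.mp hi)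
  have hhigh : ∏ i ∈ range t, edgeWeight q t (t + 2 + i) (B (t + 2 + i)) (B (t + 2 + i + 1)) =
      q ^ ∑ i ∈ range t, (B (t + 2 + i) : ℤ) ^ 2 := by
    rw [← prod_zpow_eq_zpow_sum hq]
    refine prod_congr rfl fun i _ ↦ ?_
    rw [edgeWeight, if_neg (by lia), if_neg (by lia), if_neg (by lia)]
  have hexp : (∑ i ∈ range t, (B (t + 2 + i) : ℤ) ^ 2) + (triangle (B (t + 1)) - B (t + 1)) -
      (∑ i ∈ range (t + 1), (B (i + 1) : ℤ) * B i) - ∑ i ∈ range t, (B i : ℤ) =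
        (∑ i ∈ range t, -((B (i + 1) : ℤ) * B i + B i)) + -((B (t + 1) : ℤ) * B t) +
          (triangle (B (t + 1)) - B (t + 1)) + ∑ i ∈ range t, (B (t + 2 + i) : ℤ) ^ 2 := by
    rw [sum_range_succ, sum_neg_distrib, sum_add_distrib]
    ring
  rw [show 2 * t + 2 = t + 2 + t by ring, prod_range_add, prod_range_succ, prod_range_succ, hlow,
    hhigh, hexp, zpow_add₀ hq, zpow_add₀ hq, zpow_add₀ hq]
  simp only [edgeWeight, lt_irrefl, if_true, if_false, Nat.succ_ne_self,
    not_lt_of_gt (Nat.lt_succ_self t)]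
  ring

theorem CTerm_congr (q : ℂ) {t n : ℕ} {A A' : ℕ → ℕ} (h : ∀ j ≤ 2 * t, A j = A' j) :
    CTerm q t n A = CTerm q t n A' := by
  have hsq : ∑ i ∈ range t, (A (t + 1 + i) : ℤ) ^ 2 = ∑ i ∈ range t, (A' (t + 1 + i) : ℤ) ^ 2 :=
    sum_congr rfl fun i hi ↦ by rw [h _ (by grind)]
  have hmul : ∑ i ∈ range t, (A i : ℤ) * A (i + 1) = ∑ i ∈ range t, (A' i : ℤ) * A' (i + 1) :=
    sum_congr rfl fun i hi ↦ by rw [h _ (by grind), h _ (by grind)]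
  have hlin : ∑ i ∈ range (t - 1), (A i : ℤ) = ∑ i ∈ range (t - 1), (A' i : ℤ) :=
    sum_congr rfl fun i hi ↦ by rw [h _ (by grind)]
  have hden : ∏ i ∈ range (2 * t), qPoch q q (A (i + 1) - A i) =
      ∏ i ∈ range (2 * t), qPoch q q (A' (i + 1) - A' i) :=
    prod_congr rfl fun i hi ↦ by rw [h _ (by grind), h _ (by grind)]
  rw [CTerm, CTerm, hsq, hmul, hlin, hden, h t (by lia), h (t - 1) (by lia), h 0 (by lia),
    h (2 * t) le_rfl]

theorem prod_chainKernel_eq_CTerm {q : ℂ} (hq : q ≠ 0) (t : ℕ) {B : ℕ → ℕ} (hB₀ : B 0 = 0)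
    (hB : ∀ i < 2 * t + 2, B i ≤ B (i + 1)) :
    ∏ i ∈ range (2 * t + 2), chainKernel q t i (B i) (B (i + 1)) =
      CTerm q t (B (2 * t + 2)) fun j ↦ B (j + 1) := by
  have hprev : (if 1 ≤ t then (B (t - 1 + 1) : ℤ) else 0) = B t := by
    cases t <;> simp [hB₀]
  have hmul : ∑ i ∈ range (t + 1), (B (i + 1) : ℤ) * B i =
      ∑ i ∈ range t, (B (i + 1) : ℤ) * B (i + 1 + 1) := by
    simp [sum_range_succ', hB₀, mul_comm]
  have hlin : ∑ i ∈ range t, (B i : ℤ) = ∑ i ∈ range (t - 1), (B (i + 1) : ℤ) := by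
    cases t <;> simp [sum_range_succ', hB₀]
  have hden : ∏ i ∈ range (2 * t + 2), qPoch q q (B (i + 1) - B i) =
      qPoch q q (B (2 * t + 2) - B (2 * t + 1)) *
        (∏ i ∈ range (2 * t), qPoch q q (B (i + 1 + 1) - B (i + 1))) * qPoch q q (B (0 + 1)) := by
    rw [prod_range_succ, prod_range_succ', hB₀, Nat.sub_zero]
    ring
  have hsq : ∑ i ∈ range t, (B (t + 2 + i) : ℤ) ^ 2 = ∑ i ∈ range t, (B (t + 1 + i + 1) : ℤ) ^ 2 :=
    sum_congr rfl fun i _ ↦ by congr 3; ring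
  have htri : triangle (B (t + 1)) - B (t + 1) = (B (t + 1) : ℤ) * (B (t + 1) - 1) / 2 := by
    refine Int.eq_ediv_of_mul_eq_right two_ne_zero ?_
    linarith [two_mul_triangle (B (t + 1))]
  simp only [chainKernel, CTerm]
  rw [prod_mul_distrib, prod_edgeWeight hq, prod_invQFact_sub q hB, hprev, ← hlin, ← hmul, ← hsq,
    ← hden, htri, div_eq_mul_inv]

theorem chainSum_eq_sum_CTerm {q : ℂ} (hq : q ≠ 0) (t n : ℕ) :
    chainSum (chainKernel q t) (2 * t + 2) n =
      ∑ a : Fin (2 * t + 1) → Fin (n + 1) with ∀ i : Fin (2 * t), a i.castSucc ≤ a i.succ,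
        CTerm q t n (fun j ↦ if h : j < 2 * t + 1 then (a ⟨j, h⟩ : ℕ) else 0) := by
  rw [chainSum_eq_sum_monotone fun i x y ↦ chainKernel_of_lt q t i]
  refine sum_congr rfl fun a ha ↦ ?_
  rw [prod_chainKernel_eq_CTerm hq t rfl fun i ↦ padPath_le_padPath_succ (mem_filter.mp ha).2,
    padPath_succ_self]
  refine CTerm_congr q fun j hj ↦ ?_
  rw [padPath, dif_pos (by lia), dif_pos (by lia)]

theorem sum_Icc_eq_sum_unitAlpha {q : ℂ} (hq : q ≠ 0) (t l : ℕ) :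
    ∑ k ∈ Icc (-(l : ℤ)) (l - 1), (-1 : ℂ) ^ k * q ^ (-(2 * (t : ℤ) + 3) * k * (k + 1) / 2 + k) =
      ∑ r ∈ range l, q⁻¹ ^ (((t : ℤ) + 1) * (r ^ 2 + r)) * unitAlpha q⁻¹ r := by
  have hexp (k : ℤ) : -(2 * (t : ℤ) + 3) * k * (k + 1) / 2 = -((2 * t + 3) * triangle k) := by
    refine Int.ediv_eq_of_eq_mul_right two_ne_zero ?_
    linear_combination (2 * (t : ℤ) + 3) * two_mul_triangle k
  rw [sum_Icc_neg]
  refine sum_congr rfl fun r _ ↦ ?_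
  have hsign : (-1 : ℂ) ^ (-((r : ℤ) + 1)) = -(-1) ^ r := by
    rw [zpow_neg, ← inv_zpow, inv_neg_one, zpow_add_one₀ (by norm_num), zpow_natCast, mul_neg_one]
  have hpow : q⁻¹ ^ (((t : ℤ) + 1) * (r ^ 2 + r)) * q⁻¹ ^ (triangle r - r) =
      q ^ (-((2 * (t : ℤ) + 3) * triangle r) + r) := by
    rw [inv_zpow', inv_zpow', ← zpow_add₀ hq]
    congr 1
    linear_combination ((t : ℤ) + 1) * two_mul_triangle r
  have hpow' : q ^ (-((2 * (t : ℤ) + 3) * triangle r) + -(r + 1)) =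
      q ^ (-((2 * (t : ℤ) + 3) * triangle r) + r) * q⁻¹ ^ (2 * (r : ℤ) + 1) := by
    rw [inv_zpow', ← zpow_add₀ hq]
    congr 1
    ring
  rw [hexp, hexp, triangle_neg_add_one, hsign, zpow_natCast, hpow', ← hpow, unitAlpha]
  ring

theorem lowerAlpha_dualAlpha {q : ℂ} (hq : q ≠ 0) (t l : ℕ) :
    lowerAlpha q 0 (dualAlpha q t) l = q ^ ((l : ℤ) ^ 2 - l) * (1 - q ^ (2 * (l : ℤ))) *
      ∑ k ∈ Icc (-(l : ℤ)) (l - 1),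
        (-1 : ℂ) ^ k * q ^ (-(2 * (t : ℤ) + 3) * k * (k + 1) / 2 + k) := by
  rw [sum_Icc_eq_sum_unitAlpha hq, lowerAlpha, add_zero, add_zero,
    show ((l : ℤ) - 1) * l = l ^ 2 - l by ring]
  congr 1
  refine sum_congr rfl fun r _ ↦ ?_
  have hcancel : -((r : ℤ) * (r + 0 + 1)) + (r ^ 2 + r) = 0 := by ring
  rw [dualAlpha, ← mul_assoc, ← zpow_add₀ hq, hcancel, zpow_zero, one_mul]

end TorusKnot

open TorusKnot in
theorem stmt3_general (t n : ℕ) {q : ℂ} (hq : q ≠ 0) (hfin : ¬IsOfFinOrder q) :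
    (∑ l ∈ range (n + 1),
      q ^ ((t + 2) * l ^ 2 - l) * (1 - q ^ (2 * l)) /
          (qPoch q q (n - l) * qPoch q q (n + l)) *
        ∑ k ∈ Icc (-(l : ℤ)) ((l : ℤ) - 1),
          (-1 : ℂ) ^ k * q ^ (-(2 * (t : ℤ) + 3) * k * (k + 1) / 2 + k)) =
    ∑ a : Fin (2 * t + 1) → Fin (n + 1) with ∀ i : Fin (2 * t), a i.castSucc ≤ a i.succ,
      CTerm q t n (fun j ↦ if h : j < 2 * t + 1 then (a ⟨j, h⟩ : ℕ) else 0) := by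
  rw [← chainSum_eq_sum_CTerm hq, show 2 * t + 2 = t + 2 + t by ring,
    isBaileyPair_chainSum_high hq hfin t n]
  refine sum_congr rfl fun l hl ↦ ?_
  have hln : l ≤ n := Nat.lt_succ_iff.mp (mem_range.mp hl)
  have hle : l ≤ (t + 2) * l ^ 2 :=
    (Nat.le_self_pow two_ne_zero l).trans (Nat.le_mul_of_pos_left _ (by lia))
  have hpow : q ^ ((t + 2) * l ^ 2 - l) =
      q ^ (((t : ℤ) + 1) * l ^ 2) * q ^ ((l : ℤ) ^ 2 - l) := by
    rw [← zpow_natCast, Nat.cast_sub hle, ← zpow_add₀ hq]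
    congr 1
    push_cast
    ring
  have hpow' : q ^ (2 * (l : ℤ)) = q ^ (2 * l) := by exact_mod_cast zpow_natCast q (2 * l)
  beta_reduce
  rw [lowerAlpha_dualAlpha hq, baileyKernel, add_zero, ← Nat.cast_sub hln, ← Nat.cast_add,
    invQFact_natCast, invQFact_natCast, hpow, hpow', div_eq_mul_inv, mul_inv]
  ring

/-- the multisum expression for `-q^{t-n} C_{n-1}(T*_{(2,2t+1)};q)`
(the paper's `t` is `t+1` here, so `t+1 = T`, `2T+1 = 2t+3`, `T+1 = t+2`). -/
theorem stmt3 (t n : ℕ) (hn : 1 ≤ n) (q : ℂ)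
    (hq0 : 0 < ‖q‖) (hq1 : ‖q‖ < 1) :
    (∑ l ∈ Finset.range (n + 1),
      q ^ ((t + 2) * l ^ 2 - l) * (1 - q ^ (2 * l)) /
          (qPoch q q (n - l) * qPoch q q (n + l)) *
        ∑ k ∈ Finset.Icc (-(l : ℤ)) ((l : ℤ) - 1),
          (-1 : ℂ) ^ k * q ^ (-(2 * (t : ℤ) + 3) * k * (k + 1) / 2 + k)) =
    ∑ a ∈ Finset.univ.filter
        (fun a : Fin (2 * t + 1) → Fin (n + 1) => ∀ i : Fin (2 * t), a i.castSucc ≤ a i.succ),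
      CTerm q t n (fun j => if h : j < 2 * t + 1 then (a ⟨j, h⟩ : ℕ) else 0) := by
  exact stmt3_general t n (norm_pos_iff.mp hq0) fun h ↦ hq1.ne h.norm_eq_one
end
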